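/- For any finite simple graph G of order n with minimum degree δ ≥ k, where k ≥ 1 is an integer, writing δ̂ = δ − k + 1 and b̃_{k−1} = C(δ+1, k−1), the k-tuple domination number satisfies both γ_{×k}(G) ≤ (1 − δ̂ / ((1+δ̂)^{1+1/δ̂} · b̃_{k−1}^{1/δ̂})) · n and γ_{×k}(G) ≤ ((ln(δ − k + 2) + ln b̃_{k−1} + 1)/(δ − k + 2)) · n. -/

import Mathlib

open Finset Real

/-- The k-tuple domination number: the minimum cardinality of a set X such that every
vertex has at least k members of X in its closed neighbourhood. -/
noncomputable def kTupleDomNum {V : Type*} [Fintype V] [DecidableEq V]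
    (G : SimpleGraph V) [DecidableRel G.Adj] (k : ℕ) : ℕ :=
  sInf {m : ℕ | ∃ X : Finset V,
    (∀ v, k ≤ ((insert v (G.neighborFinset v)) ∩ X).card) ∧ m = X.card}

/-!
The closed neighbourhoods of a graph of minimum degree `δ` are sets of size at least `δ + 1`, so it
suffices to bound `k`-fold transversals of a family of `(δ + 1)`-sets `S i`. Choose a random set `A`
containing every point independently with probability `p`, and add `k - |S i ∩ A|` points of `S i`
to it whenever this deficit is positive. The deficit is at most the number of `(k - 1)`-subsets `T`
of `S i` with `S i ∩ A ⊆ T`; each `T` has this property with probability `(1 - p) ^ (δ - k + 2)`.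
Hence some transversal has at most `(p + C(δ + 1, k - 1) * (1 - p) ^ (δ - k + 2)) * n` points.
Minimizing over `p` gives the first bound. For the second, let `p` be the solution of
`C(δ + 1, k - 1) * exp (-p * (δ - k + 2)) = 1 / (δ - k + 2)`, and `1` if that exceeds `1`.
-/

section MultiTransversal

variable {α ι : Type*} [DecidableEq α]

/-- `X` is a `k`-fold transversal of the family `S`: it meets every member in at least `k` points.
The `k`-tuple dominating sets of a graph are those of its closed neighbourhoods. -/
def IsMultiTransversal (S : ι → Finset α) (k : ℕ) (X : Finset α) : Prop :=
  ∀ i, k ≤ #(S i ∩ X)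

/-- The `k`-fold transversal number of the family `S`, the minimum size of a `k`-fold transversal.
It is `0` if there is none, that is, if some member has fewer than `k` points. -/
noncomputable def multiTransversalNum (S : ι → Finset α) (k : ℕ) : ℕ :=
  sInf {m : ℕ | ∃ X, IsMultiTransversal S k X ∧ m = #X}

lemma IsMultiTransversal.mono {S T : ι → Finset α} {k : ℕ} {X : Finset α}
    (hX : IsMultiTransversal T k X) (hTS : ∀ i, T i ⊆ S i) : IsMultiTransversal S k X :=
  fun i => (hX i).trans (card_le_card (inter_subset_inter_right (hTS i)))

lemma IsMultiTransversal.multiTransversalNum_le {S : ι → Finset α} {k : ℕ} {X : Finset α}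
    (hX : IsMultiTransversal S k X) : multiTransversalNum S k ≤ #X :=
  Nat.sInf_le ⟨X, hX, rfl⟩

lemma exists_isMultiTransversal_card_le_add_sum_deficit [Fintype ι] {S : ι → Finset α} {k : ℕ}
    (hk : ∀ i, k ≤ #(S i)) (A : Finset α) :
    ∃ X, IsMultiTransversal S k X ∧ #X ≤ #A + ∑ i, (k - #(S i ∩ A)) := by
  have exists_supplement : ∀ i, ∃ R ⊆ S i \ A, #R = k - #(S i ∩ A) := fun i =>
    exists_subset_card_eq <| by
      have := card_sdiff_add_card_inter (S i) A
      have := hk i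
      omega
  choose R hRS hR using exists_supplement
  refine ⟨A ∪ univ.biUnion R, fun i => ?_, ?_⟩
  · have hdisj : Disjoint (S i ∩ A) (R i) :=
      disjoint_sdiff.mono inter_subset_right (hRS i)
    have hsub : S i ∩ A ∪ R i ⊆ S i ∩ (A ∪ univ.biUnion R) :=
      union_subset (inter_subset_inter_left subset_union_left) <|
        subset_inter ((hRS i).trans sdiff_subset) <|
          (subset_biUnion_of_mem R (mem_univ i)).trans subset_union_right
    calc k ≤ #(S i ∩ A) + #(R i) := by rw [hR]; omega
      _ = #(S i ∩ A ∪ R i) := (card_union_of_disjoint hdisj).symm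
      _ ≤ #(S i ∩ (A ∪ univ.biUnion R)) := card_le_card hsub
  · calc #(A ∪ univ.biUnion R) ≤ #A + #(univ.biUnion R) := card_union_le _ _
      _ ≤ #A + ∑ i, #(R i) := Nat.add_le_add_left card_biUnion_le _
      _ = #A + ∑ i, (k - #(S i ∩ A)) := by simp only [hR]

lemma sub_card_le_card_filter_powersetCard_superset {S B : Finset α} {k : ℕ} (hB : B ⊆ S)
    (hk : k ≤ #S) : k - #B ≤ #{T ∈ S.powersetCard (k - 1) | B ⊆ T} := by
  rcases le_or_gt k #B with hkB | hBk
  · simp only [Nat.sub_eq_zero_of_le hkB, zero_le]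
  calc k - #B = (k - 1 - #B + 1).choose (k - 1 - #B) := by
        rw [Nat.choose_succ_self_right]; omega
    _ ≤ (#S - #B).choose (k - 1 - #B) := Nat.choose_le_choose _ (by omega)
    _ = #{T ∈ S.powersetCard (k - 1) | B ⊆ T} :=
        (card_filter_powersetCard_subset B S (k - 1) hB (by omega)).symm

end MultiTransversal

section RandomSubset

variable {α ι : Type*} [Fintype α] [DecidableEq α] [Fintype ι]

/-- The probability that a random subset of `α`, which contains every point independently with
probability `p`, is equal to `A`. Expectations are written as sums against this weight. -/
def bernoulliWeight (p : ℝ) (A : Finset α) : ℝ := p ^ #A * (1 - p) ^ #Aᶜ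

lemma bernoulliWeight_nonneg {p : ℝ} (hp : p ∈ Set.Icc 0 1) (A : Finset α) :
    0 ≤ bernoulliWeight p A :=
  mul_nonneg (pow_nonneg hp.1 _) (pow_nonneg (sub_nonneg.2 hp.2) _)

lemma sum_bernoulliWeight_disjoint (p : ℝ) (U : Finset α) :
    ∑ A with Disjoint A U, bernoulliWeight p A = (1 - p) ^ #U := by
  have hfilter : ({A | Disjoint A U} : Finset (Finset α)) = Uᶜ.powerset := by
    ext A
    simp only [mem_filter_univ, mem_powerset, subset_compl_iff_disjoint_right]
  have hweight : ∀ A ∈ Uᶜ.powerset,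
      bernoulliWeight p A = (1 - p) ^ #U * (p ^ #A * (1 - p) ^ (#Uᶜ - #A)) := fun A hA => by
    have := card_le_card (mem_powerset.1 hA)
    have := card_add_card_compl A
    have := card_add_card_compl U
    rw [bernoulliWeight, show #Aᶜ = #U + (#Uᶜ - #A) by omega, pow_add]
    ring
  rw [hfilter, sum_congr rfl hweight, ← mul_sum, sum_pow_mul_eq_add_pow, add_sub_cancel, one_pow,
    mul_one]

lemma sum_bernoulliWeight (p : ℝ) : ∑ A : Finset α, bernoulliWeight p A = 1 := by
  simpa using sum_bernoulliWeight_disjoint p (∅ : Finset α)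

lemma sum_bernoulliWeight_mem (p : ℝ) (a : α) : ∑ A with a ∈ A, bernoulliWeight p A = p := by
  have havoid := sum_bernoulliWeight_disjoint p {a}
  simp only [disjoint_singleton_right, card_singleton, pow_one] at havoid
  have hsplit := sum_filter_add_sum_filter_not univ (a ∈ ·) (bernoulliWeight p)
  rw [havoid, sum_bernoulliWeight] at hsplit
  linarith

lemma sum_bernoulliWeight_mul_card (p : ℝ) :
    ∑ A : Finset α, bernoulliWeight p A * #A = p * Fintype.card α := by
  calc ∑ A : Finset α, bernoulliWeight p A * #A
      = ∑ A : Finset α, ∑ a, if a ∈ A then bernoulliWeight p A else 0 :=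
        sum_congr rfl fun A _ => by simp [mul_comm]
    _ = ∑ a : α, ∑ A with a ∈ A, bernoulliWeight p A := by simp only [sum_filter]; rw [sum_comm]
    _ = p * Fintype.card α := by simp [sum_bernoulliWeight_mem, mul_comm]

lemma sum_bernoulliWeight_mul_deficit_le {p : ℝ} (hp : p ∈ Set.Icc 0 1) {S : Finset α} {k : ℕ}
    (hk : k ≤ #S) :
    ∑ A, bernoulliWeight p A * (k - #(S ∩ A) : ℕ) ≤
      (#S).choose (k - 1) * (1 - p) ^ (#S - (k - 1)) := by
  have hsub_iff : ∀ A T : Finset α, S ∩ A ⊆ T ↔ Disjoint A (S \ T) := fun A T => by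
    grind [Finset.disjoint_left]
  calc ∑ A, bernoulliWeight p A * (k - #(S ∩ A) : ℕ)
      ≤ ∑ A, bernoulliWeight p A * #{T ∈ S.powersetCard (k - 1) | S ∩ A ⊆ T} := by
        gcongr with A
        · exact bernoulliWeight_nonneg hp A
        · exact sub_card_le_card_filter_powersetCard_superset inter_subset_left hk
    _ = ∑ A, ∑ T ∈ S.powersetCard (k - 1),
          if Disjoint A (S \ T) then bernoulliWeight p A else 0 :=
        sum_congr rfl fun A _ => by
          simp only [hsub_iff, ← sum_filter, sum_const, nsmul_eq_mul, mul_comm]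
    _ = ∑ T ∈ S.powersetCard (k - 1), (1 - p) ^ #(S \ T) := by
        rw [sum_comm]
        simp only [← sum_filter, sum_bernoulliWeight_disjoint]
    _ = ∑ T ∈ S.powersetCard (k - 1), (1 - p) ^ (#S - (k - 1)) :=
        sum_congr rfl fun T hT => by
          obtain ⟨hTS, hcard⟩ := mem_powersetCard.1 hT
          rw [card_sdiff_of_subset hTS, hcard]
    _ = (#S).choose (k - 1) * (1 - p) ^ (#S - (k - 1)) := by
        rw [sum_const, card_powersetCard, nsmul_eq_mul]

theorem multiTransversalNum_le_of_mem_Icc {p : ℝ} (hp : p ∈ Set.Icc 0 1) {S : ι → Finset α}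
    {k s : ℕ} (hks : k ≤ s) (hS : ∀ i, s ≤ #(S i)) :
    (multiTransversalNum S k : ℝ) ≤
      p * Fintype.card α + Fintype.card ι * (s.choose (k - 1) * (1 - p) ^ (s - (k - 1))) := by
  choose T hTS hT using fun i => exists_subset_card_eq (hS i)
  have hkT : ∀ i, k ≤ #(T i) := fun i => hks.trans_eq (hT i).symm
  have halter : ∀ A : Finset α,
      (multiTransversalNum S k : ℝ) ≤ #A + ∑ i, ((k - #(T i ∩ A) : ℕ) : ℝ) := fun A => by
    obtain ⟨X, hX, hcard⟩ := exists_isMultiTransversal_card_le_add_sum_deficit hkT A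
    exact_mod_cast (hX.mono hTS).multiTransversalNum_le.trans hcard
  calc (multiTransversalNum S k : ℝ)
      = ∑ A : Finset α, bernoulliWeight p A * multiTransversalNum S k := by
        rw [← sum_mul, sum_bernoulliWeight, one_mul]
    _ ≤ ∑ A, bernoulliWeight p A * (#A + ∑ i, ((k - #(T i ∩ A) : ℕ) : ℝ)) := by
        gcongr with A
        · exact bernoulliWeight_nonneg hp A
        · exact halter A
    _ = p * Fintype.card α + ∑ i, ∑ A, bernoulliWeight p A * (k - #(T i ∩ A) : ℕ) := by
        simp only [mul_add, sum_add_distrib, sum_bernoulliWeight_mul_card, mul_sum]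
        rw [sum_comm]
    _ ≤ p * Fintype.card α + ∑ _i : ι, s.choose (k - 1) * (1 - p) ^ (s - (k - 1)) := by
        gcongr with i
        simpa only [hT] using sum_bernoulliWeight_mul_deficit_le hp (hkT i)
    _ = p * Fintype.card α + Fintype.card ι * (s.choose (k - 1) * (1 - p) ^ (s - (k - 1))) := by
        rw [sum_const, card_univ, nsmul_eq_mul]

end RandomSubset

lemma exists_mem_Icc_add_mul_one_sub_pow_eq {m : ℕ} (hm : m ≠ 0) {b : ℝ} (hb : 1 ≤ (1 + m) * b) :
    ∃ p ∈ Set.Icc (0 : ℝ) 1, p + b * (1 - p) ^ (m + 1) =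
      1 - m / ((1 + m : ℝ) ^ (1 + 1 / m : ℝ) * b ^ (1 / m : ℝ)) := by
  have : (m : ℝ) ≠ 0 := Nat.cast_ne_zero.2 hm
  have hm1 : (0 : ℝ) < 1 + m := by positivity
  have hb0 : 0 < b := pos_of_mul_pos_right (one_pos.trans_le hb) hm1.le
  -- `1 - c⁻¹` is the critical point of the left-hand side as a function of `p`.
  set c : ℝ := ((1 + m) * b) ^ (1 / m : ℝ) with hc
  have hc1 : 1 ≤ c := one_le_rpow hb (by positivity)
  have hc0 : 0 < c := one_pos.trans_le hc1
  have hcm : c ^ m = (1 + m) * b := by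
    rw [hc, one_div, rpow_inv_natCast_pow (by positivity) hm]
  have hden : (1 + m : ℝ) ^ (1 + 1 / m : ℝ) * b ^ (1 / m : ℝ) = (1 + m) * c := by
    rw [hc, mul_rpow hm1.le hb0.le, rpow_add hm1, rpow_one, mul_assoc]
  refine ⟨1 - c⁻¹, ⟨sub_nonneg.2 (inv_le_one_of_one_le₀ hc1), by simpa using hc0.le⟩, ?_⟩
  rw [hden, sub_sub_cancel, inv_pow, pow_succ, hcm]
  field_simp
  ring

lemma exists_mem_Icc_add_mul_one_sub_pow_le_log {m : ℕ} {b : ℝ} (hb : 1 ≤ m * b) :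
    ∃ p ∈ Set.Icc (0 : ℝ) 1, p + b * (1 - p) ^ m ≤ (log m + log b + 1) / m := by
  have hm : m ≠ 0 := by rintro rfl; norm_num at hb
  have hm0 : (0 : ℝ) < m := by positivity
  have hb0 : 0 < b := pos_of_mul_pos_right (one_pos.trans_le hb) hm0.le
  rw [← log_mul hm0.ne' hb0.ne']
  have hlog : 0 ≤ log (m * b) := log_nonneg hb
  rcases le_or_gt (log (m * b)) m with hle | hlt
  · refine ⟨log (m * b) / m, ⟨by positivity, div_le_one_of_le₀ hle hm0.le⟩, ?_⟩
    calc log (m * b) / m + b * (1 - log (m * b) / m) ^ m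
        ≤ log (m * b) / m + b * exp (-log (m * b)) := by
          gcongr
          exact one_sub_div_pow_le_exp_neg hle
      _ = (log (m * b) + 1) / m := by
          rw [exp_neg, exp_log (by positivity)]
          field_simp
  · refine ⟨1, ⟨zero_le_one, le_rfl⟩, ?_⟩
    rw [sub_self, zero_pow hm, mul_zero, add_zero, le_div_iff₀ hm0]
    linarith

theorem k_tuple_domination_bounds_general
    {α ι : Type*} [Fintype α] [DecidableEq α] [Fintype ι] (S : ι → Finset α)
    (n : ℕ) (hn : n = Fintype.card α) (hι : Fintype.card ι ≤ n)
    (δ : ℕ) (hδ : ∀ i, δ + 1 ≤ #(S i))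
    (k : ℕ) (hk : 1 ≤ k) (hkδ : k ≤ δ)
    (dh : ℝ) (hdh : dh = (δ : ℝ) - k + 1)
    (b : ℝ) (hb : b = ((δ + 1).choose (k - 1) : ℕ)) :
    (multiTransversalNum S k : ℝ) ≤
      (1 - dh / ((1 + dh) ^ (1 + 1 / dh) * b ^ (1 / dh))) * n ∧
    (multiTransversalNum S k : ℝ) ≤
      ((log ((δ : ℝ) - k + 2) + log b + 1) / ((δ : ℝ) - k + 2)) * n := by
  obtain ⟨m, rfl⟩ : ∃ m, δ = k + m := ⟨δ - k, by omega⟩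
  obtain rfl : dh = (m + 1 : ℕ) := by rw [hdh]; push_cast; ring
  have hb1 : 1 ≤ b := by rw [hb]; exact_mod_cast Nat.choose_pos (by omega)
  have key : ∀ p ∈ Set.Icc (0 : ℝ) 1,
      (multiTransversalNum S k : ℝ) ≤ (p + b * (1 - p) ^ (m + 1 + 1)) * n := fun p hp => by
    have hq : 0 ≤ 1 - p := sub_nonneg.2 hp.2
    calc (multiTransversalNum S k : ℝ)
        ≤ p * n + Fintype.card ι * (b * (1 - p) ^ (k + m + 1 - (k - 1))) := by
          rw [hn, hb]; exact multiTransversalNum_le_of_mem_Icc hp (by omega) hδ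
      _ ≤ p * n + n * (b * (1 - p) ^ (k + m + 1 - (k - 1))) := by gcongr
      _ = (p + b * (1 - p) ^ (m + 1 + 1)) * n := by
          rw [show k + m + 1 - (k - 1) = m + 1 + 1 by omega]; ring
  constructor
  · obtain ⟨p, hp, hval⟩ := exists_mem_Icc_add_mul_one_sub_pow_eq (m := m + 1) (b := b)
      (by omega) (by push_cast; nlinarith)
    exact hval ▸ key p hp
  · obtain ⟨p, hp, hval⟩ := exists_mem_Icc_add_mul_one_sub_pow_le_log (m := m + 1 + 1) (b := b)
      (by push_cast; nlinarith)
    rw [show ((k + m : ℕ) : ℝ) - k + 2 = (m + 1 + 1 : ℕ) by push_cast; ring]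
    exact (key p hp).trans (by gcongr)

section ClosedNeighborhood

variable {V : Type*} [Fintype V] [DecidableEq V] (G : SimpleGraph V) [DecidableRel G.Adj]

lemma kTupleDomNum_eq_multiTransversalNum (k : ℕ) :
    kTupleDomNum G k = multiTransversalNum (fun v => insert v (G.neighborFinset v)) k :=
  rfl

lemma minDegree_lt_card_closedNeighborhood (v : V) :
    G.minDegree < #(insert v (G.neighborFinset v)) := by
  rw [card_insert_of_notMem (G.notMem_neighborFinset_self v), G.card_neighborFinset_eq_degree]
  exact Nat.lt_succ_of_le (G.minDegree_le_degree v)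

end ClosedNeighborhood

theorem k_tuple_domination_bounds
    {V : Type*} [Fintype V] [DecidableEq V]
    (G : SimpleGraph V) [DecidableRel G.Adj]
    (n : ℕ) (hn : n = Fintype.card V)
    (δ : ℕ) (hδ : δ = G.minDegree)
    (k : ℕ) (hk : 1 ≤ k) (hkδ : k ≤ δ)
    (dh : ℝ) (hdh : dh = (δ : ℝ) - k + 1)
    (b : ℝ) (hb : b = ((δ + 1).choose (k - 1) : ℕ)) :
    (kTupleDomNum G k : ℝ) ≤ (1 - dh / ((1 + dh) ^ (1 + 1 / dh) * b ^ (1 / dh))) * n ∧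
    (kTupleDomNum G k : ℝ) ≤
      ((Real.log ((δ : ℝ) - k + 2) + Real.log b + 1) / ((δ : ℝ) - k + 2)) * n := by
  subst hδ
  rw [kTupleDomNum_eq_multiTransversalNum]
  exact k_tuple_domination_bounds_general _ n hn hn.ge _ (minDegree_lt_card_closedNeighborhood G)
    k hk hkδ dh hdh b hb
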